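/- Let L be a commutative subspace lattice on H, let Φ be a rank preserving linear map on Alg L, and let M, N be nonzero, non-isolated elements of L with M₋ ≠ H and N₋ ≠ H. If M is consistent with respect to Φ and N is twisted with respect to Φ, then M ∩ N = {0} and M₋^⊥ ∩ N₋^⊥ = {0}. -/

import Mathlib

open scoped InnerProductSpace

noncomputable section

/-- The join (closed linear span) of a family of subspaces of a Hilbert space. -/
def closedJoin {H : Type*} [NormedAddCommGroup H] [InnerProductSpace ℂ H]
    (S : Set (Submodule ℂ H)) : Submodule ℂ H :=
  (sSup S).topologicalClosure

/-- A subspace lattice on `H`: a family of closed subspaces containing `{0}` and `H`,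
closed under arbitrary intersections and arbitrary closed linear spans. -/
structure IsSubspaceLattice {H : Type*} [NormedAddCommGroup H] [InnerProductSpace ℂ H]
    (L : Set (Submodule ℂ H)) : Prop where
  isClosed : ∀ E ∈ L, IsClosed (E : Set H)
  bot_mem : ⊥ ∈ L
  top_mem : ⊤ ∈ L
  sInf_mem : ∀ S : Set (Submodule ℂ H), S ⊆ L → sInf S ∈ L
  join_mem : ∀ S : Set (Submodule ℂ H), S ⊆ L → closedJoin S ∈ L

/-- `M₋`: the join of all members of `L` that do not contain `M`. -/
def minus {H : Type*} [NormedAddCommGroup H] [InnerProductSpace ℂ H]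
    (L : Set (Submodule ℂ H)) (M : Submodule ℂ H) : Submodule ℂ H :=
  closedJoin {E | E ∈ L ∧ ¬ M ≤ E}

open Classical in
/-- The orthogonal projection of `H` onto a closed subspace `E`, as an operator on `H`
(junk value `0` if `E` is not closed). -/
def projOf {H : Type*} [NormedAddCommGroup H] [InnerProductSpace ℂ H] [CompleteSpace H]
    (E : Submodule ℂ H) : H →L[ℂ] H :=
  if h : IsClosed (E : Set H) then
    haveI : CompleteSpace E := h.completeSpace_coe
    E.subtypeL.comp (Submodule.orthogonalProjectionOnto E)
  else 0

/-- A commutative subspace lattice: the orthogonal projections onto members commute. -/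
structure IsCSL {H : Type*} [NormedAddCommGroup H] [InnerProductSpace ℂ H] [CompleteSpace H]
    (L : Set (Submodule ℂ H)) extends IsSubspaceLattice L : Prop where
  commutes : ∀ E ∈ L, ∀ F ∈ L, projOf E * projOf F = projOf F * projOf E

/-- Complete distributivity of the lattice `L` (meets are intersections, joins are
closed linear spans). -/
def IsCompletelyDistributive {H : Type*} [NormedAddCommGroup H] [InnerProductSpace ℂ H]
    (L : Set (Submodule ℂ H)) : Prop :=
  ∀ (I : Type) (J : I → Type) (E : (i : I) → J i → Submodule ℂ H),
    (∀ i j, E i j ∈ L) →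
     ((⨅ i, closedJoin (Set.range (E i)))
        = closedJoin (Set.range fun φ : (∀ i, J i) => ⨅ i, E i (φ i)))
    ∧ (closedJoin (Set.range fun i => ⨅ j, E i j)
        = ⨅ φ : (∀ i, J i), closedJoin (Set.range fun i => E i (φ i)))

/-- `Alg L`: all bounded operators leaving every member of `L` invariant. -/
def algL {H : Type*} [NormedAddCommGroup H] [InnerProductSpace ℂ H]
    (L : Set (Submodule ℂ H)) : Set (H →L[ℂ] H) :=
  {T | ∀ E ∈ L, ∀ x ∈ E, T x ∈ E}

/-- The rank one operator `x ⊗ f* : h ↦ ⟨h, f⟩ x`. -/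
def rankOne {H : Type*} [NormedAddCommGroup H] [InnerProductSpace ℂ H]
    (x f : H) : H →L[ℂ] H :=
  (innerSL ℂ f).smulRight x

/-- The rank of a bounded operator: the dimension of its range. -/
def opRank {H : Type*} [NormedAddCommGroup H] [InnerProductSpace ℂ H]
    (T : H →L[ℂ] H) : Cardinal :=
  Module.rank ℂ (LinearMap.range (T : H →ₗ[ℂ] H))

/-- `Φ` is a linear map of `Alg L` into itself. -/
structure IsLinearOnAlg {H : Type*} [NormedAddCommGroup H] [InnerProductSpace ℂ H]
    (L : Set (Submodule ℂ H)) (Φ : (H →L[ℂ] H) → (H →L[ℂ] H)) : Prop where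
  maps : ∀ A ∈ algL L, Φ A ∈ algL L
  map_add : ∀ A ∈ algL L, ∀ B ∈ algL L, Φ (A + B) = Φ A + Φ B
  map_smul : ∀ (c : ℂ), ∀ A ∈ algL L, Φ (c • A) = c • Φ A

/-- `Φ` preserves the rank of every finite rank operator in `Alg L`. -/
def RankPreserving {H : Type*} [NormedAddCommGroup H] [InnerProductSpace ℂ H]
    (L : Set (Submodule ℂ H)) (Φ : (H →L[ℂ] H) → (H →L[ℂ] H)) : Prop :=
  ∀ A ∈ algL L, opRank A < Cardinal.aleph0 → opRank (Φ A) = opRank A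

/-- `a ∼ b`: (nonzero) vectors `a` and `b` are linearly dependent. -/
def Dep {H : Type*} [NormedAddCommGroup H] [InnerProductSpace ℂ H] (a b : H) : Prop :=
  ∃ c : ℂ, c ≠ 0 ∧ b = c • a

/-- `N` is consistent with respect to `Φ`. -/
def Consistent {H : Type*} [NormedAddCommGroup H] [InnerProductSpace ℂ H]
    (L : Set (Submodule ℂ H)) (Φ : (H →L[ℂ] H) → (H →L[ℂ] H))
    (N : Submodule ℂ H) : Prop :=
  N ≠ ⊥ ∧ minus L N ≠ ⊤ ∧
    ∃ (U : N →ₗ[ℂ] H) (V : ((minus L N)ᗮ : Submodule ℂ H) →ₗ[ℂ] H),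
      ∀ (x : N) (f : ((minus L N)ᗮ : Submodule ℂ H)),
        Φ (rankOne (x : H) (f : H)) = rankOne (U x) (V f)

/-- `N` is twisted with respect to `Φ`. -/
def Twisted {H : Type*} [NormedAddCommGroup H] [InnerProductSpace ℂ H]
    (L : Set (Submodule ℂ H)) (Φ : (H →L[ℂ] H) → (H →L[ℂ] H))
    (N : Submodule ℂ H) : Prop :=
  N ≠ ⊥ ∧ minus L N ≠ ⊤ ∧
    ∃ (U : ((minus L N)ᗮ : Submodule ℂ H) →ₗ⋆[ℂ] H) (V : N →ₗ⋆[ℂ] H),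
      ∀ (x : N) (f : ((minus L N)ᗮ : Submodule ℂ H)),
        Φ (rankOne (x : H) (f : H)) = rankOne (U f) (V x)

/-- `N` is isolated: `dim N = 1` and `N^⊥ ∈ L`. -/
def Isolated {H : Type*} [NormedAddCommGroup H] [InnerProductSpace ℂ H]
    (L : Set (Submodule ℂ H)) (N : Submodule ℂ H) : Prop :=
  Module.rank ℂ N = 1 ∧ Nᗮ ∈ L

/-- The family `F` of all `N ∈ L` with `N ≠ {0}` and `N₋ ≠ H`. -/
def famF {H : Type*} [NormedAddCommGroup H] [InnerProductSpace ℂ H]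
    (L : Set (Submodule ℂ H)) : Set (Submodule ℂ H) :=
  {N | N ∈ L ∧ N ≠ ⊥ ∧ minus L N ≠ ⊤}

/-- Subspaces are comparable if one contains the other. -/
def Comparable' {H : Type*} [NormedAddCommGroup H] [InnerProductSpace ℂ H]
    (M N : Submodule ℂ H) : Prop :=
  M ≤ N ∨ N ≤ M

/-- There is a chain in `F` from `M` to `N`. -/
def ChainConn {H : Type*} [NormedAddCommGroup H] [InnerProductSpace ℂ H]
    (L : Set (Submodule ℂ H)) (M N : Submodule ℂ H) : Prop :=
  ∃ (n : ℕ) (c : Fin (n + 1) → Submodule ℂ H),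
    (∀ k, c k ∈ famF L) ∧ c 0 = M ∧ c (Fin.last n) = N ∧
      ∀ k : Fin n, Comparable' (c k.castSucc) (c k.succ)

/-- `𝔊_N`: all members of `F` that can be connected to `N` by a chain. -/
def GSet {H : Type*} [NormedAddCommGroup H] [InnerProductSpace ℂ H]
    (L : Set (Submodule ℂ H)) (N : Submodule ℂ H) : Set (Submodule ℂ H) :=
  {M | M ∈ famF L ∧ ChainConn L N M}

end

/-! The points of `ℙ M` and of `ℙ (M₋ᗮ)` parametrize, up to scalars, the rank one operators `x ⊗ f*`
of `Alg L` with `x ∈ M` and `f ∈ M₋ᗮ`, and likewise for `N`. An operator `x ⊗ f* + y ⊗ g*` with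
nonzero vectors has rank at most one exactly when `x`, `y` or `f`, `g` define the same point, so
rank preservation, applied to the images `Ux ⊗ (Vf)*` and `U'g ⊗ (V'y)*`, becomes
`[x] = [y] ∨ [f] = [g] ↔ [Ux] = [U'g] ∨ [Vf] = [V'y]`.
All four maps `U`, `V`, `U'`, `V'` are injective, but on the right `x` is compared with `g` and `f`
with `y`. If `[x] = [y]`, the right side forces `ℙ (N₋ᗮ)` or `ℙ (M₋ᗮ)` to be a single point, and
chasing the equivalence further shows that the corresponding `N` or `M` has just one line as well.
In a CSL that means that it is isolated. Exchanging vectors and functionals gives the other half. -/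

open Module Function
open scoped LinearAlgebra.Projectivization

section Incidence

variable {X Y F G P Q P' Q' : Type*} {i : X → P} {j : Y → P} {k : F → Q} {l : G → Q}
  {u : X → P'} {u' : G → P'} {v : F → Q'} {v' : Y → Q'}

/-- The trace on points of a consistent and a twisted subspace: `X`, `F` stand for `ℙ M`, `ℙ (M₋ᗮ)`
and `Y`, `G` for `ℙ N`, `ℙ (N₋ᗮ)`; `i`, `j`, `k`, `l` are the inclusions into the ambient projective
space, and `u`, `v`, `u'`, `v'` the maps of points induced by the consistency maps `U`, `V` of `M`
and the twisting maps `U'`, `V'` of `N`. -/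
structure CrossedIncidence (i : X → P) (j : Y → P) (k : F → Q) (l : G → Q)
    (u : X → P') (u' : G → P') (v : F → Q') (v' : Y → Q') : Prop where
  injective_i : Injective i
  injective_j : Injective j
  injective_k : Injective k
  injective_l : Injective l
  injective_u : Injective u
  injective_u' : Injective u'
  injective_v : Injective v
  injective_v' : Injective v'
  eq_or_eq_iff : ∀ x y f g, i x = j y ∨ k f = l g ↔ u x = u' g ∨ v f = v' y

namespace CrossedIncidence

theorem swap (h : CrossedIncidence i j k l u u' v v') :
    CrossedIncidence j i l k v' v u' u where
  injective_i := h.injective_j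
  injective_j := h.injective_i
  injective_k := h.injective_l
  injective_l := h.injective_k
  injective_u := h.injective_v'
  injective_u' := h.injective_v
  injective_v := h.injective_u'
  injective_v' := h.injective_u
  eq_or_eq_iff y x g f := by
    simpa only [eq_comm, or_comm] using h.eq_or_eq_iff x y f g

theorem dual (h : CrossedIncidence i j k l u u' v v') :
    CrossedIncidence k l i j v v' u u' where
  injective_i := h.injective_k
  injective_j := h.injective_l
  injective_k := h.injective_i
  injective_l := h.injective_j
  injective_u := h.injective_v
  injective_u' := h.injective_v'
  injective_v := h.injective_u
  injective_v' := h.injective_u'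
  eq_or_eq_iff f g x y := by
    simpa only [or_comm] using h.eq_or_eq_iff x y f g

theorem ne_of_forall_eq [Nonempty F] [Nonempty G] (h : CrossedIncidence i j k l u u' v v')
    (hXF : Nontrivial X ∨ Nontrivial F) (hYG : Nontrivial Y ∨ Nontrivial G)
    {x : X} (hx : ∀ g, u x = u' g) (y : Y) : i x ≠ j y := by
  intro hxy
  obtain ⟨f₀⟩ := ‹Nonempty F›
  obtain ⟨g₀⟩ := ‹Nonempty G›
  have hG : Subsingleton G := ⟨fun g g' ↦ h.injective_u' ((hx g).symm.trans (hx g'))⟩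
  have : Nontrivial Y := hYG.resolve_right (not_nontrivial_iff_subsingleton.mpr hG)
  obtain ⟨y₁, hy₁⟩ := exists_ne y
  have hkl (f : F) : k f = l g₀ :=
    ((h.eq_or_eq_iff x y₁ f g₀).mpr (.inl (hx g₀))).resolve_left
      fun hxy₁ ↦ hy₁ (h.injective_j (hxy₁.symm.trans hxy))
  have hF : Subsingleton F := ⟨fun f f' ↦ h.injective_k ((hkl f).trans (hkl f').symm)⟩
  have : Nontrivial X := hXF.resolve_right (not_nontrivial_iff_subsingleton.mpr hF)
  obtain ⟨x₁, hx₁⟩ := exists_ne x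
  have hv (z : Y) : v f₀ = v' z :=
    ((h.eq_or_eq_iff x₁ z f₀ g₀).mp (.inr (hkl f₀))).resolve_left
      fun hu ↦ hx₁ (h.injective_u (hu.trans (hx g₀).symm))
  exact hy₁ (h.injective_v' ((hv y₁).symm.trans (hv y)))

theorem ne [Nonempty F] [Nonempty G] (h : CrossedIncidence i j k l u u' v v')
    (hXF : Nontrivial X ∨ Nontrivial F) (hYG : Nontrivial Y ∨ Nontrivial G) (x : X) (y : Y) :
    i x ≠ j y := by
  intro hxy
  have hcross : ∀ f g, u x = u' g ∨ v f = v' y :=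
    fun f g ↦ (h.eq_or_eq_iff x y f g).mp (.inl hxy)
  by_cases hx : ∀ g, u x = u' g
  · exact h.ne_of_forall_eq hXF hYG hx y hxy
  · obtain ⟨g, hg⟩ := not_forall.mp hx
    have hy (f : F) : v' y = v f := ((hcross f g).resolve_left hg).symm
    exact h.swap.ne_of_forall_eq hYG hXF hy x hxy.symm

end CrossedIncidence

end Incidence

section Projective

variable {K V : Type*}

theorem finrank_eq_one_of_subsingleton_projectivization [DivisionRing K] [AddCommGroup V]
    [Module K V] [Nontrivial V] [Subsingleton (ℙ K V)] : finrank K V = 1 := by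
  obtain ⟨v, hv⟩ := exists_ne (0 : V)
  refine finrank_eq_one v hv fun w ↦ ?_
  by_cases hw : w = 0
  · exact ⟨0, by rw [hw, zero_smul]⟩
  · exact (Projectivization.mk_eq_mk_iff' K w v hw hv).mp (Subsingleton.elim _ _)

theorem inf_eq_bot_of_forall_map_subtype_ne [DivisionRing K] [AddCommGroup V] [Module K V]
    {E F : Submodule K V}
    (h : ∀ p q, Projectivization.map E.subtype E.injective_subtype p ≠
      Projectivization.map F.subtype F.injective_subtype q) : E ⊓ F = ⊥ := by
  refine (Submodule.eq_bot_iff _).mpr fun x hx ↦ by_contra fun hx₀ ↦ ?_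
  exact h (.mk K ⟨x, hx.1⟩ (Subtype.coe_ne_coe.mp hx₀))
    (.mk K ⟨x, hx.2⟩ (Subtype.coe_ne_coe.mp hx₀)) rfl

end Projective

section Rank

variable {K V W : Type*} [Field K] [AddCommGroup V] [Module K V] [AddCommGroup W] [Module K W]

theorem rank_smulRight_le_one (φ : Dual K V) (x : W) : (φ.smulRight x).rank ≤ 1 := by
  refine (rank_submodule_le_one_iff' _).mpr ⟨x, ?_⟩
  rintro _ ⟨k, rfl⟩
  exact Submodule.mem_span_singleton.mpr ⟨φ k, rfl⟩

theorem mem_range_smulRight_add_smulRight {φ ψ : Dual K V} (h : φ ∉ K ∙ ψ) (x y : W) :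
    x ∈ LinearMap.range (φ.smulRight x + ψ.smulRight y) := by
  obtain ⟨k, hψ, hφ⟩ : ∃ k, ψ k = 0 ∧ φ k ≠ 0 := by
    by_contra! hker
    refine h ?_
    simpa using mem_span_of_iInf_ker_le_ker (L := fun _ : Unit ↦ ψ) (K := φ)
      (by simpa [SetLike.le_def] using hker)
  exact ⟨(φ k)⁻¹ • k, by simp [hψ, hφ]⟩

theorem rank_smulRight_add_smulRight_le_one_iff {x y : W} {φ ψ : Dual K V} (hx : x ≠ 0)
    (hy : y ≠ 0) (hφ : φ ≠ 0) (hψ : ψ ≠ 0) :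
    (φ.smulRight x + ψ.smulRight y).rank ≤ 1 ↔
      Projectivization.mk K x hx = .mk K y hy ∨ Projectivization.mk K φ hφ = .mk K ψ hψ := by
  constructor
  · intro hrank
    by_contra! hne
    have hφψ : φ ∉ K ∙ ψ := fun h ↦ hne.2 <|
      (Projectivization.mk_eq_mk_iff' K _ _ hφ hψ).mpr (Submodule.mem_span_singleton.mp h)
    have hψφ : ψ ∉ K ∙ φ := fun h ↦ hne.2.symm <|
      (Projectivization.mk_eq_mk_iff' K _ _ hψ hφ).mpr (Submodule.mem_span_singleton.mp h)
    obtain ⟨w, hw⟩ := (rank_submodule_le_one_iff' _).mp hrank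
    obtain ⟨a, rfl⟩ := Submodule.mem_span_singleton.mp <|
      hw (mem_range_smulRight_add_smulRight hφψ x y)
    obtain ⟨b, rfl⟩ := Submodule.mem_span_singleton.mp <|
      hw (add_comm (φ.smulRight (a • w)) _ ▸ mem_range_smulRight_add_smulRight hψφ y (a • w))
    have hb : b ≠ 0 := left_ne_zero_of_smul hy
    exact hne.1 ((Projectivization.mk_eq_mk_iff' K _ _ hx hy).mpr
      ⟨a * b⁻¹, by rw [smul_smul, inv_mul_cancel_right₀ hb]⟩)
  · rintro (h | h) <;> obtain ⟨a, rfl⟩ := (Projectivization.mk_eq_mk_iff' K _ _ _ _).mp h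
    · have : φ.smulRight (a • y) + ψ.smulRight y = (a • φ + ψ).smulRight y := by
        ext k; simp [add_smul, smul_smul, mul_comm]
      exact this ▸ rank_smulRight_le_one _ _
    · have : (a • ψ).smulRight x + ψ.smulRight y = ψ.smulRight (a • x + y) := by
        ext k; simp [smul_smul, mul_comm]
      exact this ▸ rank_smulRight_le_one _ _

end Rank

section Operators

variable {H : Type*} [NormedAddCommGroup H] [InnerProductSpace ℂ H]

theorem opRank_eq_zero_iff {T : H →L[ℂ] H} : opRank T = 0 ↔ T = 0 := by
  rw [opRank, Submodule.rank_eq_zero, LinearMap.range_eq_bot]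
  exact ContinuousLinearMap.coe_inj (g := 0)

theorem rankOne_eq_zero_iff {x f : H} : rankOne x f = 0 ↔ x = 0 ∨ f = 0 :=
  InnerProductSpace.rankOne_eq_zero

theorem opRank_rankOne_le_one (x f : H) : opRank (rankOne x f) ≤ 1 :=
  rank_smulRight_le_one (innerₛₗ ℂ f) x

theorem opRank_add_le (S T : H →L[ℂ] H) : opRank (S + T) ≤ opRank S + opRank T :=
  LinearMap.rank_add_le (S : H →ₗ[ℂ] H) T

theorem injective_innerₛₗ : Injective (innerₛₗ ℂ : H →ₗ⋆[ℂ] Dual ℂ H) :=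
  fun _ _ h ↦ ext_inner_right ℂ (LinearMap.congr_fun h)

theorem opRank_rankOne_add_rankOne_le_one_iff {x y f g : H} (hx : x ≠ 0) (hy : y ≠ 0)
    (hf : f ≠ 0) (hg : g ≠ 0) :
    opRank (rankOne x f + rankOne y g) ≤ 1 ↔
      Projectivization.mk ℂ x hx = .mk ℂ y hy ∨ Projectivization.mk ℂ f hf = .mk ℂ g hg := by
  rw [← (Projectivization.map_injective (τ := starRingEnd ℂ) (innerₛₗ ℂ)
    injective_innerₛₗ).eq_iff (a := .mk ℂ f hf)]
  exact rank_smulRight_add_smulRight_le_one_iff hx hy _ _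

theorem injective_of_rankOne_ne_zero {σ τ : ℂ →+* ℂ} {E F : Type*} [AddCommGroup E] [Module ℂ E]
    [AddCommGroup F] [Module ℂ F] [Nontrivial E] [Nontrivial F]
    {U : E →ₛₗ[σ] H} {V : F →ₛₗ[τ] H}
    (h : ∀ x f, x ≠ 0 → f ≠ 0 → rankOne (U x) (V f) ≠ 0) : Injective U ∧ Injective V := by
  simp only [Ne, rankOne_eq_zero_iff, not_or] at h
  obtain ⟨x₀, hx₀⟩ := exists_ne (0 : E)
  obtain ⟨f₀, hf₀⟩ := exists_ne (0 : F)
  exact ⟨(injective_iff_map_eq_zero U).mpr fun x ↦ not_imp_not.mp fun hx ↦ (h x f₀ hx hf₀).1,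
    (injective_iff_map_eq_zero V).mpr fun f ↦ not_imp_not.mp fun hf ↦ (h x₀ f hx₀ hf).2⟩

end Operators

section Lattice

variable {H : Type*} [NormedAddCommGroup H] [InnerProductSpace ℂ H]
  {L : Set (Submodule ℂ H)} {Φ : (H →L[ℂ] H) → (H →L[ℂ] H)} {M N E : Submodule ℂ H}

theorem le_minus (hE : E ∈ L) (hME : ¬ M ≤ E) : E ≤ minus L M :=
  (le_sSup (show E ∈ {E | E ∈ L ∧ ¬ M ≤ E} from ⟨hE, hME⟩)).trans
    (Submodule.le_topologicalClosure _)

theorem rankOne_mem_algL {x f : H} (hx : x ∈ M) (hf : f ∈ (minus L M)ᗮ) :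
    rankOne x f ∈ algL L := by
  intro E hE h hh
  change ⟪f, h⟫_ℂ • x ∈ E
  by_cases hME : M ≤ E
  · exact E.smul_mem _ (hME hx)
  · rw [Submodule.inner_left_of_mem_orthogonal (le_minus hE hME hh) hf, zero_smul]
    exact E.zero_mem

theorem add_mem_algL {A B : H →L[ℂ] H} (hA : A ∈ algL L) (hB : B ∈ algL L) : A + B ∈ algL L :=
  fun E hE x hx ↦ E.add_mem (hA E hE x hx) (hB E hE x hx)

theorem RankPreserving.map_rankOne_ne_zero (hΦ : RankPreserving L Φ) {x f : H}
    (h : rankOne x f ∈ algL L) (hx : x ≠ 0) (hf : f ≠ 0) : Φ (rankOne x f) ≠ 0 := by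
  rw [Ne, ← opRank_eq_zero_iff,
    hΦ _ h ((opRank_rankOne_le_one x f).trans_lt Cardinal.one_lt_aleph0),
    opRank_eq_zero_iff, rankOne_eq_zero_iff]
  exact not_or.mpr ⟨hx, hf⟩

theorem RankPreserving.opRank_map_rankOne_add_map_rankOne (hΦ : RankPreserving L Φ)
    (hlin : IsLinearOnAlg L Φ) {x y f g : H} (hxf : rankOne x f ∈ algL L)
    (hyg : rankOne y g ∈ algL L) :
    opRank (Φ (rankOne x f) + Φ (rankOne y g)) = opRank (rankOne x f + rankOne y g) := by
  rw [← hlin.map_add _ hxf _ hyg]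
  refine hΦ _ (add_mem_algL hxf hyg) ((opRank_add_le _ _).trans_lt (Cardinal.add_lt_aleph0 ?_ ?_))
  all_goals exact (opRank_rankOne_le_one _ _).trans_lt Cardinal.one_lt_aleph0

variable [CompleteSpace H]

theorem nontrivial_orthogonal_minus (h : minus L M ≠ ⊤) : Nontrivial (minus L M)ᗮ := by
  rw [Submodule.nontrivial_iff_ne_bot, minus, closedJoin, Submodule.orthogonal_closure]
  exact Submodule.topologicalClosure_eq_top_iff.not.mp h

theorem Consistent.exists_injective (hM : Consistent L Φ M) (hΦ : RankPreserving L Φ) :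
    ∃ (U : M →ₗ[ℂ] H) (V : (minus L M)ᗮ →ₗ[ℂ] H), Injective U ∧ Injective V ∧
      ∀ (x : M) (f : ↥(minus L M)ᗮ), Φ (rankOne (x : H) (f : H)) = rankOne (U x) (V f) := by
  obtain ⟨hM₀, hMm, U, V, hUV⟩ := hM
  have := Submodule.nontrivial_iff_ne_bot.mpr hM₀
  have := nontrivial_orthogonal_minus hMm
  obtain ⟨hU, hV⟩ := injective_of_rankOne_ne_zero (U := U) (V := V) fun x f hx hf ↦
    hUV x f ▸ hΦ.map_rankOne_ne_zero (rankOne_mem_algL x.2 f.2) (Subtype.coe_ne_coe.mpr hx)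
      (Subtype.coe_ne_coe.mpr hf)
  exact ⟨U, V, hU, hV, hUV⟩

theorem Twisted.exists_injective (hN : Twisted L Φ N) (hΦ : RankPreserving L Φ) :
    ∃ (U : (minus L N)ᗮ →ₗ⋆[ℂ] H) (V : N →ₗ⋆[ℂ] H), Injective U ∧ Injective V ∧
      ∀ (x : N) (f : ↥(minus L N)ᗮ), Φ (rankOne (x : H) (f : H)) = rankOne (U f) (V x) := by
  obtain ⟨hN₀, hNm, U, V, hUV⟩ := hN
  have := Submodule.nontrivial_iff_ne_bot.mpr hN₀
  have := nontrivial_orthogonal_minus hNm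
  obtain ⟨hU, hV⟩ := injective_of_rankOne_ne_zero (U := U) (V := V) fun f x hf hx ↦
    hUV x f ▸ hΦ.map_rankOne_ne_zero (rankOne_mem_algL x.2 f.2) (Subtype.coe_ne_coe.mpr hx)
      (Subtype.coe_ne_coe.mpr hf)
  exact ⟨U, V, hU, hV, hUV⟩

theorem RankPreserving.exists_crossedIncidence (hΦ : RankPreserving L Φ)
    (hlin : IsLinearOnAlg L Φ) (hM : Consistent L Φ M) (hN : Twisted L Φ N) :
    ∃ (u : ℙ ℂ M → ℙ ℂ H) (u' : ℙ ℂ (minus L N)ᗮ → ℙ ℂ H)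
      (v : ℙ ℂ (minus L M)ᗮ → ℙ ℂ H) (v' : ℙ ℂ N → ℙ ℂ H),
      CrossedIncidence (Projectivization.map M.subtype M.injective_subtype)
        (Projectivization.map N.subtype N.injective_subtype)
        (Projectivization.map (minus L M)ᗮ.subtype (minus L M)ᗮ.injective_subtype)
        (Projectivization.map (minus L N)ᗮ.subtype (minus L N)ᗮ.injective_subtype) u u' v v' := by
  obtain ⟨U, V, hU, hV, hUV⟩ := hM.exists_injective hΦ
  obtain ⟨U', V', hU', hV', hUV'⟩ := hN.exists_injective hΦ
  refine ⟨.map U hU, .map U' hU', .map V hV, .map V' hV', ?_⟩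
  constructor
  case eq_or_eq_iff =>
    intro p q r s
    induction p with | h x hx =>
    induction q with | h y hy =>
    induction r with | h f hf =>
    induction s with | h g hg =>
    have hsource := opRank_rankOne_add_rankOne_le_one_iff (Subtype.coe_ne_coe.mpr hx)
      (Subtype.coe_ne_coe.mpr hy) (Subtype.coe_ne_coe.mpr hf) (Subtype.coe_ne_coe.mpr hg)
    have himage := opRank_rankOne_add_rankOne_le_one_iff (map_zero U ▸ hU.ne hx)
      (map_zero U' ▸ hU'.ne hg) (map_zero V ▸ hV.ne hf) (map_zero V' ▸ hV'.ne hy)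
    have hrank := hΦ.opRank_map_rankOne_add_map_rankOne hlin (rankOne_mem_algL x.2 f.2)
      (rankOne_mem_algL y.2 g.2)
    rw [hUV, hUV'] at hrank
    exact hsource.symm.trans (hrank ▸ himage)
  all_goals exact Projectivization.map_injective _ _

theorem projOf_eq_starProjection [E.HasOrthogonalProjection] (hE : IsClosed (E : Set H)) :
    projOf E = E.starProjection :=
  dif_pos hE

theorem IsCSL.isOrtho_of_inf_eq_bot (hL : IsCSL L) (hM : M ∈ L) (hN : N ∈ L) (h : M ⊓ N = ⊥) :
    M ⟂ N := by
  have : CompleteSpace M := (hL.isClosed M hM).completeSpace_coe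
  have : CompleteSpace N := (hL.isClosed N hN).completeSpace_coe
  have hcomm (x : H) : M.starProjection (N.starProjection x) =
      N.starProjection (M.starProjection x) := by
    rw [← projOf_eq_starProjection (hL.isClosed M hM),
      ← projOf_eq_starProjection (hL.isClosed N hN)]
    exact DFunLike.congr_fun (hL.commutes M hM N hN) x
  refine Submodule.starProjection_comp_starProjection_eq_zero_iff.mp
    (ContinuousLinearMap.ext fun x ↦ (Submodule.mem_bot ℂ).mp (h ▸ ⟨?_, ?_⟩))
  · exact M.starProjection_apply_mem _
  · exact (hcomm x).symm ▸ N.starProjection_apply_mem _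

theorem IsCSL.le_orthogonal_minus (hL : IsCSL L) (hM : Minimal (fun E ↦ E ∈ L ∧ E ≠ ⊥) M) :
    M ≤ (minus L M)ᗮ := by
  rw [minus, closedJoin, Submodule.orthogonal_closure, ← Submodule.isOrtho_iff_le,
    Submodule.isOrtho_sSup_right]
  rintro E ⟨hE, hME⟩
  refine hL.isOrtho_of_inf_eq_bot hM.prop.1 hE (by_contra fun hne ↦ hME ?_)
  have hmem : M ⊓ E ∈ L :=
    sInf_pair (a := M) ▸ hL.sInf_mem {M, E} (Set.pair_subset hM.prop.1 hE)
  exact (hM.le_of_le ⟨hmem, hne⟩ inf_le_left).trans inf_le_right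

theorem IsCSL.isolated_of_finrank_eq_one (hL : IsCSL L) (hM : M ∈ L) (hdim : finrank ℂ M = 1)
    (hdim' : finrank ℂ (minus L M)ᗮ = 1) : Isolated L M := by
  have hatom : IsAtom M := Submodule.isAtom_iff_finrank_eq_one.mpr hdim
  have hle : M ≤ (minus L M)ᗮ := hL.le_orthogonal_minus
    ⟨⟨hM, hatom.ne_bot⟩, fun E hE hEM ↦ ((hatom.le_iff_eq hE.2).mp hEM).ge⟩
  have : FiniteDimensional ℂ (minus L M)ᗮ := .of_finrank_eq_succ hdim'
  have heq : M = (minus L M)ᗮ := Submodule.eq_of_le_of_finrank_eq hle (hdim.trans hdim'.symm)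
  have hmem : minus L M ∈ L := hL.join_mem _ fun E hE ↦ hE.1
  refine ⟨rank_eq_one_iff_finrank_eq_one.mpr hdim, ?_⟩
  rwa [heq, Submodule.orthogonal_orthogonal_eq_closure,
    (hL.isClosed _ hmem).submodule_topologicalClosure_eq]

theorem IsCSL.nontrivial_of_not_isolated (hL : IsCSL L) (hM : M ∈ L) [Nontrivial M]
    [Nontrivial (minus L M)ᗮ] (hiso : ¬ Isolated L M) :
    Nontrivial (ℙ ℂ M) ∨ Nontrivial (ℙ ℂ (minus L M)ᗮ) := by
  by_contra! h
  obtain ⟨_, _⟩ := h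
  exact hiso (hL.isolated_of_finrank_eq_one hM finrank_eq_one_of_subsingleton_projectivization
    finrank_eq_one_of_subsingleton_projectivization)

end Lattice

theorem stmt_8_general {H : Type*} [NormedAddCommGroup H] [InnerProductSpace ℂ H]
    [CompleteSpace H] (L : Set (Submodule ℂ H)) (hL : IsCSL L)
    (Φ : (H →L[ℂ] H) → (H →L[ℂ] H)) (hlin : IsLinearOnAlg L Φ)
    (hrank : RankPreserving L Φ)
    (M N : Submodule ℂ H) (hM : M ∈ L) (hN : N ∈ L)
    (hMiso : ¬ Isolated L M) (hNiso : ¬ Isolated L N)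
    (hMc : Consistent L Φ M) (hNt : Twisted L Φ N) :
    M ⊓ N = ⊥ ∧ (minus L M)ᗮ ⊓ (minus L N)ᗮ = ⊥ := by
  obtain ⟨u, u', v, v', h⟩ := hrank.exists_crossedIncidence hlin hMc hNt
  have := Submodule.nontrivial_iff_ne_bot.mpr hMc.1
  have := Submodule.nontrivial_iff_ne_bot.mpr hNt.1
  have := nontrivial_orthogonal_minus hMc.2.1
  have := nontrivial_orthogonal_minus hNt.2.1
  have hM_points := hL.nontrivial_of_not_isolated hM hMiso
  have hN_points := hL.nontrivial_of_not_isolated hN hNiso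
  exact ⟨inf_eq_bot_of_forall_map_subtype_ne (h.ne hM_points hN_points),
    inf_eq_bot_of_forall_map_subtype_ne (h.dual.ne hM_points.symm hN_points.symm)⟩

theorem stmt_8 {H : Type*} [NormedAddCommGroup H] [InnerProductSpace ℂ H]
    [CompleteSpace H] [TopologicalSpace.SeparableSpace H]
    (L : Set (Submodule ℂ H)) (hL : IsCSL L)
    (Φ : (H →L[ℂ] H) → (H →L[ℂ] H)) (hlin : IsLinearOnAlg L Φ)
    (hrank : RankPreserving L Φ)
    (M N : Submodule ℂ H) (hM : M ∈ L) (hN : N ∈ L)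
    (hM0 : M ≠ ⊥) (hN0 : N ≠ ⊥)
    (hMiso : ¬ Isolated L M) (hNiso : ¬ Isolated L N)
    (hMm : minus L M ≠ ⊤) (hNm : minus L N ≠ ⊤)
    (hMc : Consistent L Φ M) (hNt : Twisted L Φ N) :
    M ⊓ N = ⊥ ∧ (minus L M)ᗮ ⊓ (minus L N)ᗮ = ⊥ :=
  stmt_8_general L hL Φ hlin hrank M N hM hN hMiso hNiso hMc hNt
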